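/- Let μ₁, μ₂ be probability measures on ℝ with continuous, everywhere positive densities f_{μ₁}, f_{μ₂} with respect to Lebesgue measure, and let L > 0. If 𝓘♭_{μ₂}(v) ≥ (1/L)·𝓘♭_{μ₁}(v) for all v ∈ (0,1), then for every k ≥ 1, λ_k^Lip(ℝ,|·|,μ₂) ≥ (1/L²)·λ_k^Lip(ℝ,|·|,μ₁). -/

import Mathlib

open MeasureTheory Filter Topology ENNReal

/-- The local Lipschitz constant `|∇f|(x) = limsup_{y→x} |f(y)-f(x)|/d(y,x)`
(equal to `0` at isolated points, by the convention `Real.sInf ∅ = 0`). -/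
noncomputable def localLip {Ω : Type*} [PseudoMetricSpace Ω] (f : Ω → ℝ) (x : Ω) : ℝ :=
  Filter.limsup (fun y => |f y - f x| / dist y x) (nhdsWithin x {x}ᶜ)

/-- Membership in the metric Sobolev space `W^{1,2}_Lip(Ω,d,μ)`. -/
def memW12Lip {Ω : Type*} [PseudoMetricSpace Ω] [MeasurableSpace Ω]
    (μ : Measure Ω) (f : Ω → ℝ) : Prop :=
  LocallyLipschitz f ∧
    (∫⁻ x, ENNReal.ofReal ((f x) ^ 2) ∂μ) + (∫⁻ x, ENNReal.ofReal ((localLip f x) ^ 2) ∂μ) < ⊤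

/-- The `k`-th metric eigenvalue `λ_k^Lip(Ω,d,μ)`: the infimum over `k`-dimensional
linear subspaces `F ⊆ W^{1,2}_Lip` of the supremum of the Rayleigh quotient over `F`. -/
noncomputable def lambdaLip {Ω : Type*} [PseudoMetricSpace Ω] [MeasurableSpace Ω]
    (μ : Measure Ω) (k : ℕ) : ℝ :=
  sInf { a : ℝ | ∃ F : Submodule ℝ (Ω → ℝ), Module.finrank ℝ F = k ∧
    (∀ f ∈ F, memW12Lip μ f) ∧
    a = sSup { r : ℝ | ∃ f ∈ F, (∫ x, (f x) ^ 2 ∂μ) ≠ 0 ∧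
      r = (∫ x, (localLip f x) ^ 2 ∂μ) / (∫ x, (f x) ^ 2 ∂μ) } }

/-- The cumulative distribution function `F_μ(x) = μ((-∞,x])` of a measure on `ℝ`. -/
noncomputable def cdf (μ : Measure ℝ) : ℝ → ℝ := fun x => (μ (Set.Iic x)).toReal

/-- The one-sided flat isoperimetric profile `𝓘♭_μ = f_μ ∘ F_μ⁻¹` of a measure on `ℝ`
with density `f` (here `F_μ⁻¹` is interpreted via `Function.invFun`). -/
noncomputable def flatIsopProfile (μ : Measure ℝ) (f : ℝ → ℝ) : ℝ → ℝ :=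
  fun v => f (Function.invFun (cdf μ) v)

lemma aux_localLip_eq {f : ℝ → ℝ} {x : ℝ} (h : DifferentiableAt ℝ f x) :
    localLip f x = |deriv f x| := by
  unfold localLip
  have h1 := (hasDerivAt_iff_tendsto_slope.1 h.hasDerivAt).abs
  refine Tendsto.limsup_eq (h1.congr fun y => ?_)
  rw [slope_def_field, abs_div, Real.dist_eq]

lemma aux_ae_diff {f : ℝ → ℝ} (hf : LocallyLipschitz f) :
    ∀ᵐ x, DifferentiableAt ℝ f x := by
  have hloc : LocallyBoundedVariationOn f Set.univ := by
    intro a b _ _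
    have hK : IsCompact (Set.Icc a b) := isCompact_Icc
    obtain ⟨K, hK⟩ := (hf.locallyLipschitzOn (s := Set.Icc a b)).exists_lipschitzOnWith_of_compact hK
    rw [Set.univ_inter]
    have := hK.locallyBoundedVariationOn
    by_cases hab : a ≤ b
    · simpa using this a b (Set.left_mem_Icc.2 hab) (Set.right_mem_Icc.2 hab)
    · simp [Set.Icc_eq_empty hab, BoundedVariationOn]
  exact hloc.ae_differentiableAt

lemma aux_localLip_ae {μ : Measure ℝ} (hμ : μ ≪ volume) {f : ℝ → ℝ} (hf : LocallyLipschitz f) :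
    (fun x => localLip f x ^ 2) =ᵐ[μ] fun x => deriv f x ^ 2 := by
  filter_upwards [hμ.ae_le (aux_ae_diff hf)] with x hx
  rw [aux_localLip_eq hx, sq_abs]

lemma aux_memLp_iff {μ : Measure ℝ} {g : ℝ → ℝ} (hg : AEStronglyMeasurable g μ) :
    MemLp g 2 μ ↔ ∫⁻ x, ENNReal.ofReal (g x ^ 2) ∂μ < ⊤ := by
  rw [memLp_two_iff_integrable_sq hg]
  unfold Integrable
  rw [hasFiniteIntegral_iff_ofReal (ae_of_all _ fun x => sq_nonneg _)]
  exact and_iff_right (hg.pow 2)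

lemma aux_mem_iff {μ : Measure ℝ} (hμ : μ ≪ volume) (f : ℝ → ℝ) :
    memW12Lip μ f ↔ LocallyLipschitz f ∧ MemLp f 2 μ ∧ MemLp (deriv f) 2 μ := by
  unfold memW12Lip
  refine and_congr_right fun hf => ?_
  rw [aux_memLp_iff hf.continuous.aestronglyMeasurable,
    aux_memLp_iff (measurable_deriv f).aestronglyMeasurable, ENNReal.add_lt_top]
  have h : ∫⁻ x, ENNReal.ofReal (localLip f x ^ 2) ∂μ = ∫⁻ x, ENNReal.ofReal (deriv f x ^ 2) ∂μ :=
    lintegral_congr_ae ((aux_localLip_ae hμ hf).fun_comp ENNReal.ofReal)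
  rw [h]

lemma aux_sq_norm {μ : Measure ℝ} {g : ℝ → ℝ} (hg : MemLp g 2 μ) :
    ‖hg.toLp g‖ ^ 2 = ∫ x, g x ^ 2 ∂μ := by
  rw [← real_inner_self_eq_norm_sq, L2.inner_def]
  refine integral_congr_ae ?_
  filter_upwards [hg.coeFn_toLp] with x hx
  rw [hx]; simp [sq]

lemma aux_bdd {μ : Measure ℝ} (hμ : μ ≪ volume) (hμ' : volume ≪ μ)
    (F : Submodule ℝ (ℝ → ℝ)) [FiniteDimensional ℝ F] (hF : ∀ f ∈ F, memW12Lip μ f) :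
    ∃ C : ℝ, ∀ f ∈ F, ∫ x, deriv f x ^ 2 ∂μ ≤ C * ∫ x, f x ^ 2 ∂μ := by
  have hF' := fun f hf => (aux_mem_iff hμ f).1 (hF f hf)
  let A : F →ₗ[ℝ] Lp ℝ 2 μ :=
    { toFun := fun f => (hF' f.1 f.2).2.1.toLp f.1
      map_add' := fun f g => rfl
      map_smul' := fun c f => rfl }
  let B : F →ₗ[ℝ] Lp ℝ 2 μ :=
    { toFun := fun f => (hF' f.1 f.2).2.2.toLp (deriv f.1)
      map_add' := fun f g => by
        rw [← MemLp.toLp_add]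
        refine MemLp.toLp_congr _ _ ?_
        filter_upwards [hμ.ae_le (aux_ae_diff (hF' f.1 f.2).1),
          hμ.ae_le (aux_ae_diff (hF' g.1 g.2).1)] with x h1 h2
        exact deriv_add h1 h2
      map_smul' := fun c f => by
        rw [RingHom.id_apply, ← MemLp.toLp_const_smul]
        refine MemLp.toLp_congr _ _ ?_
        filter_upwards [hμ.ae_le (aux_ae_diff (hF' f.1 f.2).1)] with x h1
        exact deriv_const_smul c h1 }
  have hA : Function.Injective A := by
    intro f g hfg
    have h1 : f.1 =ᵐ[μ] g.1 := 
      (MemLp.toLp_eq_toLp_iff (hF' f.1 f.2).2.1 (hF' g.1 g.2).2.1).1 hfg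
    have h2 : f.1 =ᵐ[volume] g.1 := hμ'.ae_le h1
    exact Subtype.ext (Continuous.ae_eq_iff_eq volume (hF' f.1 f.2).1.continuous
      (hF' g.1 g.2).1.continuous |>.1 h2)
  let e := LinearEquiv.ofInjective A hA
  let G := LinearMap.toContinuousLinearMap (B ∘ₗ e.symm.toLinearMap)
  refine ⟨‖G‖ ^ 2, fun f hf => ?_⟩
  have h := G.le_opNorm (e ⟨f, hf⟩)
  have hG : G (e ⟨f, hf⟩) = B ⟨f, hf⟩ := by simp [G]
  rw [hG] at h
  have h3 : ‖e ⟨f, hf⟩‖ = ‖A ⟨f, hf⟩‖ := rfl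
  rw [h3] at h
  have h4 : ‖A ⟨f, hf⟩‖ ^ 2 = ∫ x, f x ^ 2 ∂μ := aux_sq_norm (hF' f hf).2.1
  have h5 : ‖B ⟨f, hf⟩‖ ^ 2 = ∫ x, deriv f x ^ 2 ∂μ := aux_sq_norm (hF' f hf).2.2
  rw [← h4, ← h5, ← mul_pow]
  gcongr

lemma aux_nonempty {μ : Measure ℝ} [IsProbabilityMeasure μ] (hμ : μ ≪ volume) (k : ℕ) :
    ∃ F : Submodule ℝ (ℝ → ℝ), Module.finrank ℝ F = k ∧ ∀ f ∈ F, memW12Lip μ f := by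
  let b : Fin k → ℝ → ℝ := fun i x => max 0 (1 - |x - (i : ℕ)|)
  have hb : LinearIndependent ℝ b := by
    rw [Fintype.linearIndependent_iff]
    intro c hc i
    have := congrFun hc (i : ℕ)
    rw [Finset.sum_apply, Finset.sum_eq_single i] at this
    · simpa [b] using this
    · intro j _ hj
      have : (1 : ℝ) ≤ |((i : ℕ) : ℝ) - ((j : ℕ) : ℝ)| := by
        have h0 : ((i : ℕ) : ℤ) - ((j : ℕ) : ℤ) ≠ 0 := by
          intro h; apply hj; ext; omega
        have := Int.one_le_abs h0
        exact_mod_cast this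
      simp only [Pi.smul_apply, b, smul_eq_mul]
      rw [max_eq_left (by linarith), mul_zero]
    · simp
  refine ⟨Submodule.span ℝ (Set.range b), ?_, ?_⟩
  · simpa using finrank_span_eq_card hb
  intro f hf
  have key : (∃ K, LipschitzWith K f) ∧ ∃ M : ℝ, ∀ x, |f x| ≤ M := by
    induction hf using Submodule.span_induction with
    | mem g hg =>
      obtain ⟨i, rfl⟩ := hg
      refine ⟨⟨1, LipschitzWith.of_dist_le_mul fun x y => ?_⟩, 1, fun x => ?_⟩
      · simp only [b, Real.dist_eq, NNReal.coe_one, one_mul]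
        refine (abs_max_sub_max_le_max _ _ _ _).trans ?_
        rw [sub_self, abs_zero, max_eq_right (abs_nonneg _)]
        have := abs_abs_sub_abs_le_abs_sub (y - (i : ℕ)) (x - (i : ℕ))
        rw [show (1 - |x - (i : ℕ)|) - (1 - |y - (i : ℕ)|) = |y - (i : ℕ)| - |x - (i : ℕ)| by ring]
        refine this.trans ?_
        rw [abs_sub_comm x y]
        apply le_of_eq; congr 1; ring
      · have := abs_nonneg (x - (i : ℕ))
        simp only [b]
        rw [abs_of_nonneg (le_max_left _ _)]
        exact max_le (by norm_num) (by linarith)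
    | zero => exact ⟨⟨0, LipschitzWith.const 0⟩, 0, fun x => by simp⟩
    | add f g _ _ hf hg =>
      obtain ⟨⟨K, hK⟩, M, hM⟩ := hf
      obtain ⟨⟨K', hK'⟩, M', hM'⟩ := hg
      exact ⟨⟨_, hK.add hK'⟩, M + M', fun x =>
        (abs_add_le _ _).trans (add_le_add (hM x) (hM' x))⟩
    | smul c f _ hf =>
      obtain ⟨⟨K, hK⟩, M, hM⟩ := hf
      refine ⟨⟨‖c‖₊ * K, LipschitzWith.of_dist_le_mul fun x y => ?_⟩, |c| * M, fun x => ?_⟩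
      · have := hK.dist_le_mul x y
        simp only [Pi.smul_apply, smul_eq_mul, Real.dist_eq, ← mul_sub, abs_mul] at this ⊢
        push_cast
        rw [mul_assoc]
        gcongr
        simp
      · simp only [Pi.smul_apply, smul_eq_mul, abs_mul]
        gcongr
        exact hM x
  obtain ⟨⟨K, hK⟩, M, hM⟩ := key
  rw [aux_mem_iff hμ]
  refine ⟨hK.locallyLipschitz, ?_, ?_⟩
  · exact MemLp.of_bound hK.continuous.aestronglyMeasurable M (ae_of_all _ hM)
  · exact MemLp.of_bound (measurable_deriv f).aestronglyMeasurable K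
      (ae_of_all _ fun x => norm_deriv_le_of_lipschitz hK)

section
variable {f : ℝ → ℝ} {μ : Measure ℝ}

lemma aux_cdf_deriv (hc : Continuous f) (hpos : ∀ x, 0 < f x)
    (hμ : μ = volume.withDensity fun x => ENNReal.ofReal (f x)) [IsProbabilityMeasure μ] (x : ℝ) :
    HasDerivAt (cdf μ) (f x) x := by
  have hfin : Integrable f := by
    refine ⟨hc.aestronglyMeasurable, ?_⟩
    rw [hasFiniteIntegral_iff_ofReal (ae_of_all _ fun x => (hpos x).le)]
    have := measure_lt_top μ Set.univ
    rwa [hμ, withDensity_apply _ MeasurableSet.univ, setLIntegral_univ] at this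
  have hF : cdf μ = fun y => (∫ t in (0 : ℝ)..y, f t) + ∫ t in Set.Iic 0, f t := by
    funext y
    have h1 := intervalIntegral.integral_Iic_sub_Iic (μ := volume) (f := f) (a := 0) (b := y)
      hfin.integrableOn hfin.integrableOn
    rw [← h1, sub_add_cancel]
    rw [integral_eq_lintegral_of_nonneg_ae (ae_of_all _ fun x => (hpos x).le)
      hc.aestronglyMeasurable]
    unfold cdf
    rw [hμ, withDensity_apply _ measurableSet_Iic]
  rw [hF]
  exact (intervalIntegral.integral_hasDerivAt_right (hc.intervalIntegrable _ _)
    hc.aestronglyMeasurable.stronglyMeasurableAtFilter hc.continuousAt).add_const _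

lemma aux_cdf_mono (hc : Continuous f) (hpos : ∀ x, 0 < f x)
    (hμ : μ = volume.withDensity fun x => ENNReal.ofReal (f x)) [IsProbabilityMeasure μ] :
    StrictMono (cdf μ) :=
  strictMono_of_deriv_pos fun x => by
    rw [(aux_cdf_deriv hc hpos hμ x).deriv]; exact hpos x

lemma aux_cdf_eq [IsProbabilityMeasure μ] : cdf μ = ProbabilityTheory.cdf μ := by
  funext x
  rw [ProbabilityTheory.cdf_eq_real]; rfl

lemma aux_cdf_range (hc : Continuous f) (hpos : ∀ x, 0 < f x)
    (hμ : μ = volume.withDensity fun x => ENNReal.ofReal (f x)) [IsProbabilityMeasure μ] :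
    Set.range (cdf μ) = Set.Ioo 0 1 := by
  have hm := aux_cdf_mono hc hpos hμ
  have hcont : Continuous (cdf μ) :=
    continuous_iff_continuousAt.2 fun x => (aux_cdf_deriv hc hpos hμ x).continuousAt
  have ht : Tendsto (cdf μ) atTop (𝓝 1) := by
    rw [aux_cdf_eq]; exact ProbabilityTheory.tendsto_cdf_atTop μ
  have hb : Tendsto (cdf μ) atBot (𝓝 0) := by
    rw [aux_cdf_eq]; exact ProbabilityTheory.tendsto_cdf_atBot μ
  ext v
  constructor
  · rintro ⟨x, rfl⟩
    exact ⟨(hm.monotone.le_of_tendsto hb (x - 1)).trans_lt (hm (by linarith)),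
      (hm (show x < x + 1 by linarith)).trans_le (hm.monotone.ge_of_tendsto ht (x + 1))⟩
  · rintro ⟨h0, h1⟩
    exact mem_range_of_exists_le_of_exists_ge hcont
      ((hb.eventually_le_const h0).exists) ((ht.eventually_const_le h1).exists)
end

lemma aux_map
    (f₁ f₂ : ℝ → ℝ) (hf₁c : Continuous f₁) (hf₂c : Continuous f₂)
    (hf₁pos : ∀ x, 0 < f₁ x) (hf₂pos : ∀ x, 0 < f₂ x)
    (μ₁ μ₂ : Measure ℝ)
    (hμ₁ : μ₁ = volume.withDensity fun x => ENNReal.ofReal (f₁ x))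
    (hμ₂ : μ₂ = volume.withDensity fun x => ENNReal.ofReal (f₂ x))
    [IsProbabilityMeasure μ₁] [IsProbabilityMeasure μ₂]
    (L : ℝ) (hL : 0 < L)
    (hprof : ∀ v ∈ Set.Ioo (0 : ℝ) 1,
      (1 / L) * flatIsopProfile μ₁ f₁ v ≤ flatIsopProfile μ₂ f₂ v) :
    ∃ T T' : ℝ → ℝ, (∀ x, HasDerivAt T (T' x) x) ∧ (∀ x, |T' x| ≤ L) ∧
      Function.Surjective T ∧ μ₁.map T = μ₂ := by
  have hm1 := aux_cdf_mono hf₁c hf₁pos hμ₁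
  have hm2 := aux_cdf_mono hf₂c hf₂pos hμ₂
  have hr1 := aux_cdf_range hf₁c hf₁pos hμ₁
  have hr2 := aux_cdf_range hf₂c hf₂pos hμ₂
  set G := Function.invFun (cdf μ₂) with hGdef
  have hG : ∀ v ∈ Set.Ioo (0 : ℝ) 1, cdf μ₂ (G v) = v := fun v hv =>
    Function.invFun_eq (by rw [← hr2] at hv; exact hv)
  have hG' : ∀ x, G (cdf μ₂ x) = x := Function.leftInverse_invFun hm2.injective
  have h1mem : ∀ x, cdf μ₁ x ∈ Set.Ioo (0 : ℝ) 1 := fun x => hr1 ▸ Set.mem_range_self x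
  have h2mem : ∀ x, cdf μ₂ x ∈ Set.Ioo (0 : ℝ) 1 := fun x => hr2 ▸ Set.mem_range_self x
  have hGm : StrictMonoOn G (Set.Ioo 0 1) := fun v hv w hw h =>
    hm2.lt_iff_lt.1 (by rwa [hG v hv, hG w hw])
  have hGim : G '' Set.Ioo 0 1 = Set.univ :=
    Set.eq_univ_of_forall fun x => ⟨cdf μ₂ x, h2mem x, hG' x⟩
  have hGd : ∀ v ∈ Set.Ioo (0 : ℝ) 1, HasDerivAt G (f₂ (G v))⁻¹ v := fun v hv => by
    have hnv : Set.Ioo (0 : ℝ) 1 ∈ 𝓝 v := isOpen_Ioo.mem_nhds hv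
    refine HasDerivAt.of_local_left_inverse ?_ (aux_cdf_deriv hf₂c hf₂pos hμ₂ (G v))
      (hf₂pos _).ne' ?_
    · exact hGm.continuousAt_of_image_mem_nhds hnv (by rw [hGim]; exact univ_mem)
    · filter_upwards [hnv] with w hw using hG w hw
  have hT : ∀ x, HasDerivAt (fun x => G (cdf μ₁ x)) ((f₂ (G (cdf μ₁ x)))⁻¹ * f₁ x) x := fun x =>
    (hGd _ (h1mem x)).comp x (aux_cdf_deriv hf₁c hf₁pos hμ₁ x)
  have hTsurj : Function.Surjective (fun x => G (cdf μ₁ x)) := fun y => by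
    have : cdf μ₂ y ∈ Set.range (cdf μ₁) := by rw [hr1]; exact h2mem y
    obtain ⟨x, hx⟩ := this
    exact ⟨x, by simp only [hx]; exact hG' y⟩
  have hTc : Continuous (fun x => G (cdf μ₁ x)) :=
    continuous_iff_continuousAt.2 fun x => (hT x).continuousAt
  refine ⟨_, _, hT, fun x => ?_, hTsurj, ?_⟩
  · have h := hprof _ (h1mem x)
    unfold flatIsopProfile at h
    rw [Function.leftInverse_invFun hm1.injective x, ← hGdef] at h
    have hp := hf₂pos (G (cdf μ₁ x))
    rw [abs_of_pos (mul_pos (inv_pos.2 hp) (hf₁pos x)), inv_mul_le_iff₀ hp]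
    rw [one_div, inv_mul_le_iff₀ hL] at h
    linarith
  · have : IsProbabilityMeasure (μ₁.map fun x => G (cdf μ₁ x)) :=
      Measure.isProbabilityMeasure_map hTc.aemeasurable
    refine Measure.ext_of_Iic _ _ fun a => ?_
    obtain ⟨b, rfl⟩ := hTsurj a
    rw [Measure.map_apply hTc.measurable measurableSet_Iic]
    have hpre : (fun x => G (cdf μ₁ x)) ⁻¹' Set.Iic (G (cdf μ₁ b)) = Set.Iic b := by
      ext x
      simp only [Set.mem_preimage, Set.mem_Iic]
      rw [hGm.le_iff_le (h1mem x) (h1mem b), hm1.le_iff_le]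
    simp only [hpre]
    have := hG _ (h1mem b)
    unfold cdf at this
    exact ((ENNReal.toReal_eq_toReal_iff' (measure_ne_top _ _) (measure_ne_top _ _)).1 this).symm

/-- **Spectral comparison via one-dimensional isoperimetric profiles**
(Bobkov–Houdré + Contraction Principle): if `μ₁, μ₂` are probability measures on `ℝ`
with continuous positive densities and `𝓘♭_{μ₂} ≥ (1/L)·𝓘♭_{μ₁}` on `(0,1)`, then
`λ_k^Lip(ℝ,|·|,μ₂) ≥ (1/L²)·λ_k^Lip(ℝ,|·|,μ₁)` for all `k ≥ 1`. -/
theorem spectral_comparison_one_dimensional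
    (f₁ f₂ : ℝ → ℝ) (hf₁c : Continuous f₁) (hf₂c : Continuous f₂)
    (hf₁pos : ∀ x, 0 < f₁ x) (hf₂pos : ∀ x, 0 < f₂ x)
    (μ₁ μ₂ : Measure ℝ)
    (hμ₁ : μ₁ = volume.withDensity fun x => ENNReal.ofReal (f₁ x))
    (hμ₂ : μ₂ = volume.withDensity fun x => ENNReal.ofReal (f₂ x))
    [IsProbabilityMeasure μ₁] [IsProbabilityMeasure μ₂]
    (L : ℝ) (hL : 0 < L)
    (hprof : ∀ v ∈ Set.Ioo (0 : ℝ) 1,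
      (1 / L) * flatIsopProfile μ₁ f₁ v ≤ flatIsopProfile μ₂ f₂ v)
    (k : ℕ) (hk : 1 ≤ k) :
    (1 / L ^ 2) * lambdaLip μ₁ k ≤ lambdaLip μ₂ k := by
  have hac1 : μ₁ ≪ volume := hμ₁ ▸ withDensity_absolutelyContinuous _ _
  have hac2 : μ₂ ≪ volume := hμ₂ ▸ withDensity_absolutelyContinuous _ _
  have hac2' : volume ≪ μ₂ := by
    rw [hμ₂]
    refine withDensity_absolutelyContinuous' hf₂c.measurable.ennreal_ofReal.aemeasurable ?_
    exact ae_of_all _ fun x => by simpa using hf₂pos x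
  obtain ⟨T, T', hT, hT', hTs, hTm⟩ := aux_map f₁ f₂ hf₁c hf₂c hf₁pos hf₂pos μ₁ μ₂ hμ₁ hμ₂ L hL hprof
  have hTc : Continuous T := continuous_iff_continuousAt.2 fun x => (hT x).continuousAt
  have hTmp : MeasurePreserving T μ₁ μ₂ := ⟨hTc.measurable, hTm⟩
  have hTl : LocallyLipschitz T := by
    refine (lipschitzWith_of_nnnorm_deriv_le (C := L.toNNReal) (fun x => (hT x).differentiableAt)
      fun x => ?_).locallyLipschitz
    rw [(hT x).deriv, ← NNReal.coe_le_coe, Real.coe_toNNReal L hL.le]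
    exact hT' x
  -- derivative bound
  have hderiv : ∀ f, LocallyLipschitz f → ∀ᵐ x ∂μ₁, |deriv (f ∘ T) x| ≤ L * |deriv f (T x)| := by
    intro f hf
    have := hTmp.quasiMeasurePreserving.ae (hac2.ae_le (aux_ae_diff hf))
    filter_upwards [this] with x hx
    rw [(hx.hasDerivAt.comp x (hT x)).deriv, abs_mul, mul_comm]
    gcongr
    exact hT' x
  have hmem : ∀ f, memW12Lip μ₂ f → memW12Lip μ₁ (f ∘ T) ∧
      ∫ x, (f ∘ T) x ^ 2 ∂μ₁ = ∫ x, f x ^ 2 ∂μ₂ ∧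
      ∫ x, deriv (f ∘ T) x ^ 2 ∂μ₁ ≤ L ^ 2 * ∫ x, deriv f x ^ 2 ∂μ₂ := by
    intro f hf
    rw [aux_mem_iff hac2] at hf
    obtain ⟨hfl, hf2, hfd⟩ := hf
    have hd2 : MemLp (fun x => L * deriv f (T x)) 2 μ₁ :=
      (hfd.comp_measurePreserving hTmp).const_mul L
    have hd3 := hderiv f hfl
    refine ⟨?_, ?_, ?_⟩
    · rw [aux_mem_iff hac1]
      refine ⟨hfl.comp hTl, hf2.comp_measurePreserving hTmp, ?_⟩
      refine hd2.mono (measurable_deriv _).aestronglyMeasurable ?_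
      filter_upwards [hd3] with x hx
      rw [Real.norm_eq_abs, Real.norm_eq_abs, abs_mul, abs_of_pos hL]
      exact hx
    · rw [← hTm, integral_map (f := fun x => f x ^ 2) hTc.aemeasurable
        (hfl.continuous.pow 2).aestronglyMeasurable]
      rfl
    · rw [← hTm, integral_map hTc.aemeasurable
        ((measurable_deriv f).pow_const 2).aestronglyMeasurable, ← integral_const_mul]
      refine integral_mono_of_nonneg (ae_of_all _ fun x => sq_nonneg _) ?_ ?_
      · have := hd2.integrable_sq
        simpa only [mul_pow] using this
      · filter_upwards [hd3] with x hx
        have := pow_le_pow_left₀ (abs_nonneg _) hx 2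
        rwa [mul_pow, sq_abs, sq_abs] at this
  unfold lambdaLip
  refine le_csInf ?_ ?_
  · obtain ⟨F, h1, h2⟩ := aux_nonempty hac2 k
    exact ⟨_, F, h1, h2, rfl⟩
  rintro a ⟨F, hFk, hF, rfl⟩
  have hfd : FiniteDimensional ℝ F := FiniteDimensional.of_finrank_pos (by omega)
  obtain ⟨C, hC⟩ := aux_bdd hac2 hac2' F hF
  have hnn : ∀ (μ : Measure ℝ) (F : Submodule ℝ (ℝ → ℝ)),
      0 ≤ sSup { r : ℝ | ∃ f ∈ F, (∫ x, (f x) ^ 2 ∂μ) ≠ 0 ∧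
      r = (∫ x, (localLip f x) ^ 2 ∂μ) / (∫ x, (f x) ^ 2 ∂μ) } := by
    intro μ F
    refine Real.sSup_nonneg ?_
    rintro r ⟨f, _, _, rfl⟩
    exact div_nonneg (integral_nonneg fun x => sq_nonneg _) (integral_nonneg fun x => sq_nonneg _)
  have hbdd : BddAbove { r : ℝ | ∃ f ∈ F, (∫ x, (f x) ^ 2 ∂μ₂) ≠ 0 ∧
      r = (∫ x, (localLip f x) ^ 2 ∂μ₂) / (∫ x, (f x) ^ 2 ∂μ₂) } := by
    refine ⟨C, ?_⟩
    rintro r ⟨f, hf, hne, rfl⟩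
    have hpos : 0 < ∫ x, f x ^ 2 ∂μ₂ :=
      lt_of_le_of_ne (integral_nonneg fun x => sq_nonneg _) hne.symm
    rw [div_le_iff₀ hpos, integral_congr_ae (aux_localLip_ae hac2 (hF f hf).1)]
    exact hC f hf
  rw [one_div, inv_mul_le_iff₀ (by positivity)]
  let Φ : (ℝ → ℝ) →ₗ[ℝ] (ℝ → ℝ) := LinearMap.funLeft ℝ ℝ T
  have hΦ : Function.Injective Φ := LinearMap.funLeft_injective_of_surjective ℝ ℝ T hTs
  have hmemF : ∀ g ∈ F.map Φ, ∃ f ∈ F, f ∘ T = g := by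
    rintro g ⟨f, hf, rfl⟩
    exact ⟨f, hf, rfl⟩
  refine le_trans (csInf_le ⟨0, ?_⟩ ⟨F.map Φ, ?_, ?_, rfl⟩) ?_
  · rintro a ⟨F, -, -, rfl⟩
    exact hnn _ _
  · rw [← hFk]
    exact (F.equivMapOfInjective Φ hΦ).finrank_eq.symm
  · intro g hg
    obtain ⟨f, hf, rfl⟩ := hmemF g hg
    exact (hmem f (hF f hf)).1
  · refine Real.sSup_le ?_ (mul_nonneg (by positivity) (hnn _ _))
    rintro r ⟨g, hg, hne, rfl⟩
    obtain ⟨f, hf, rfl⟩ := hmemF g hg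
    obtain ⟨h1, h2, h3⟩ := hmem f (hF f hf)
    rw [integral_congr_ae (aux_localLip_ae hac1 h1.1), h2]
    rw [h2] at hne
    have hpos : 0 < ∫ x, f x ^ 2 ∂μ₂ :=
      lt_of_le_of_ne (integral_nonneg fun x => sq_nonneg _) hne.symm
    calc _ ≤ (L ^ 2 * ∫ x, deriv f x ^ 2 ∂μ₂) / ∫ x, f x ^ 2 ∂μ₂ := by gcongr
      _ = L ^ 2 * ((∫ x, localLip f x ^ 2 ∂μ₂) / ∫ x, f x ^ 2 ∂μ₂) := by
        rw [integral_congr_ae (aux_localLip_ae hac2 (hF f hf).1), mul_div_assoc]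
      _ ≤ _ := by
        gcongr
        exact le_csSup hbdd ⟨f, hf, hne, rfl⟩
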